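/- arXiv:1707.08089 — 2 statements merged into one kernel-verified Lean document; each statement's English description precedes it below -/
import Mathlib

section
/- Fix ζ > 0 and s > 0. For each positive integer M, let γ_M be a real random variable with the Gamma(M, ζ) distribution, i.e. with probability density f_M(x) = x^{M-1} e^{-x/ζ} / (Γ(M) ζ^M) for x ≥ 0. Then lim_{M → ∞} E[(1 + γ_M)^{s-1}] / (1 + ζ M)^{s-1} = 1. -/
open MeasureTheory ProbabilityTheory Filter

lemma gr_shift (q : ℝ) (n : ℕ) (hn : 0 < n) (h : 0 < (n:ℝ) + q) :
    Real.Gamma (n + (q+1)) / (Real.Gamma n * (n:ℝ)^(q+1)) =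
    Real.Gamma (n + q) / (Real.Gamma n * (n:ℝ)^q) * (1 + q / n) := by
  have hn' : (0:ℝ) < n := by exact_mod_cast hn
  rw [← add_assoc, Real.Gamma_add_one h.ne', Real.rpow_add_one hn'.ne']
  have := (Real.Gamma_pos_of_pos hn').ne'
  have := (Real.rpow_pos_of_pos hn' q).ne'
  field_simp

lemma gr_prod (q : ℝ) (hq : 0 < q) (n : ℕ) :
    Real.Gamma (q + n) = Real.Gamma q * ∏ j ∈ Finset.range n, (q + j) := by
  induction n with
  | zero => simp
  | succ n ih =>
    rw [Finset.prod_range_succ, ← mul_assoc, ← ih]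
    push_cast
    rw [← add_assoc, Real.Gamma_add_one (by positivity)]
    ring

lemma one_add_div_tendsto (q : ℝ) : Tendsto (fun n : ℕ => 1 + q / (n:ℝ)) atTop (nhds 1) := by
  simpa using (tendsto_const_div_atTop_nhds_zero_nat q).const_add 1

lemma gr_down (q : ℝ)
    (h : Tendsto (fun n : ℕ => Real.Gamma (n + (q+1)) / (Real.Gamma n * (n:ℝ)^(q+1))) atTop (nhds 1)) :
    Tendsto (fun n : ℕ => Real.Gamma (n + q) / (Real.Gamma n * (n:ℝ)^q)) atTop (nhds 1) := by
  have h1 := h.div (one_add_div_tendsto q) one_ne_zero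
  rw [div_one] at h1
  refine h1.congr' ?_
  have e : ∀ᶠ n : ℕ in atTop, -q < (n:ℝ) := tendsto_natCast_atTop_atTop.eventually_gt_atTop _
  filter_upwards [e, eventually_gt_atTop 0] with n h2 hn
  have hn' : (0:ℝ) < n := by exact_mod_cast hn
  have h3 : 0 < (n:ℝ) + q := by linarith
  have h4 : 1 + q / n ≠ 0 := by
    have : 1 + q / n = (n + q) / n := by field_simp
    rw [this]; positivity
  simp only [Pi.div_apply]
  rw [gr_shift q n hn h3, mul_div_cancel_right₀ _ h4]

lemma gr_pos (q : ℝ) (hq : 0 < q) :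
    Tendsto (fun n : ℕ => Real.Gamma (n + q) / (Real.Gamma n * (n:ℝ)^q)) atTop (nhds 1) := by
  apply gr_down
  have h := (Real.GammaSeq_tendsto_Gamma q).inv₀ (Real.Gamma_pos_of_pos hq).ne'
  have h := h.const_mul (Real.Gamma q)
  rw [mul_inv_cancel₀ (Real.Gamma_pos_of_pos hq).ne'] at h
  refine h.congr' ?_
  filter_upwards [eventually_gt_atTop 0] with n hn
  have hn' : (0:ℝ) < n := by exact_mod_cast hn
  have e1 : (n:ℝ) + (q+1) = q + ((n+1 : ℕ):ℝ) := by push_cast; ring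
  rw [e1, gr_prod q hq, Real.GammaSeq, ← Real.Gamma_nat_eq_factorial, Real.Gamma_add_one hn'.ne',
    Real.rpow_add_one hn'.ne']
  have := (Real.Gamma_pos_of_pos hn').ne'
  have := (Real.rpow_pos_of_pos hn' q).ne'
  field_simp

lemma gr_nat (k : ℕ) : ∀ q : ℝ, 0 < q + k →
    Tendsto (fun n : ℕ => Real.Gamma (n + q) / (Real.Gamma n * (n:ℝ)^q)) atTop (nhds 1) := by
  induction k with
  | zero => intro q hq; exact gr_pos q (by simpa using hq)
  | succ k ih =>
    intro q hq
    apply gr_down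
    apply ih
    push_cast at hq; linarith

lemma gr (q : ℝ) :
    Tendsto (fun n : ℕ => Real.Gamma (n + q) / (Real.Gamma n * (n:ℝ)^q)) atTop (nhds 1) := by
  obtain ⟨k, hk⟩ := exists_nat_gt (-q)
  exact gr_nat k q (by linarith)

lemma base_tendsto (ζ : ℝ) (hζ : 0 < ζ) (p : ℝ) :
    Tendsto (fun n : ℕ => (ζ * n) ^ p / (1 + ζ * n) ^ p) atTop (nhds 1) := by
  have h0 : Tendsto (fun n : ℕ => 1 + ζ⁻¹ / (n:ℝ)) atTop (nhds 1) := one_add_div_tendsto _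
  have h := h0.rpow_const (p := -p) (Or.inl one_ne_zero)
  rw [Real.one_rpow] at h
  refine h.congr' ?_
  filter_upwards [eventually_gt_atTop 0] with n hn
  have hn' : (0:ℝ) < n := by exact_mod_cast hn
  rw [← Real.div_rpow (by positivity) (by positivity), Real.rpow_neg (by positivity),
    ← Real.inv_rpow (by positivity)]
  congr 1
  field_simp
  ring

lemma mom_tendsto (ζ : ℝ) (hζ : 0 < ζ) (p : ℝ) (j : ℕ) :
    Tendsto (fun n : ℕ => ζ ^ (p - j) * Real.Gamma (n + (p - j)) / Real.Gamma n / (1 + ζ * n) ^ p)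
      atTop (nhds (if j = 0 then 1 else 0)) := by
  have h1 := (gr (p - j)).mul (base_tendsto ζ hζ p)
  have h2 : Tendsto (fun n : ℕ => ((ζ * n)⁻¹) ^ j) atTop (nhds (if j = 0 then 1 else 0)) := by
    have : Tendsto (fun n : ℕ => (ζ * (n:ℝ))⁻¹) atTop (nhds 0) :=
      (tendsto_natCast_atTop_atTop.const_mul_atTop hζ).inv_tendsto_atTop
    have := this.pow j
    rwa [zero_pow_eq] at this
  have h := h1.mul h2
  simp only [mul_one, one_mul] at h
  refine h.congr' ?_
  filter_upwards [eventually_gt_atTop 0] with n hn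
  have hn' : (0:ℝ) < n := by exact_mod_cast hn
  have e1 : (ζ * n) ^ p * ((ζ * n)⁻¹) ^ j = ζ ^ (p - j) * (n:ℝ) ^ (p - j) := by
    rw [← Real.mul_rpow hζ.le hn'.le, Real.rpow_sub_natCast (by positivity)]
    rw [div_eq_mul_inv, inv_pow]
  have := (Real.Gamma_pos_of_pos hn').ne'
  have h3 := (Real.rpow_pos_of_pos hn' (p - j)).ne'
  calc _ = Real.Gamma (n + (p - j)) / (Real.Gamma n * (n:ℝ) ^ (p - j)) * ((ζ * n) ^ p * ((ζ * n)⁻¹) ^ j) / (1 + ζ * n) ^ p := by ring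
    _ = _ := by rw [e1]; field_simp

lemma low_bd (p x : ℝ) (hp : -1 ≤ p) (hx : 0 < x) :
    x ^ p - x ^ (p - 1) ≤ (1 + x) ^ p := by
  have e : (1 + x) ^ p = x ^ p * (1 + x⁻¹) ^ p := by
    rw [← Real.mul_rpow (by positivity) (by positivity)]; congr 1; field_simp; ring
  have h1 : (1 + x⁻¹) ^ (-1:ℝ) ≤ (1 + x⁻¹) ^ p :=
    Real.rpow_le_rpow_of_exponent_le (by have := inv_pos.2 hx; linarith) hp
  have h2 : 1 - x⁻¹ ≤ (1 + x⁻¹) ^ (-1:ℝ) := by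
    rw [Real.rpow_neg_one, inv_eq_one_div (1 + x⁻¹), le_div_iff₀ (by positivity)]
    nlinarith [sq_nonneg x⁻¹]
  rw [e, Real.rpow_sub_one hx.ne']
  have := mul_le_mul_of_nonneg_left (h2.trans h1) (Real.rpow_pos_of_pos hx p).le
  calc _ = x ^ p * (1 - x⁻¹) := by ring
    _ ≤ _ := this

lemma up_bd (p x : ℝ) (k : ℕ) (hp : p ≤ k) (hx : 0 < x) :
    (1 + x) ^ p ≤ ∑ j ∈ Finset.range (k+1), (k.choose j : ℝ) * x ^ (p - j) := by
  have e : (1 + x) ^ p = x ^ p * (1 + x⁻¹) ^ p := by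
    rw [← Real.mul_rpow (by positivity) (by positivity)]; congr 1; field_simp; ring
  have h1 : (1 + x⁻¹) ^ p ≤ (1 + x⁻¹) ^ (k:ℝ) :=
    Real.rpow_le_rpow_of_exponent_le (by have := inv_pos.2 hx; linarith) hp
  rw [e]
  refine (mul_le_mul_of_nonneg_left h1 (Real.rpow_pos_of_pos hx p).le).trans (le_of_eq ?_)
  rw [Real.rpow_natCast, add_comm, add_pow, Finset.mul_sum]
  refine Finset.sum_congr rfl fun j _ => ?_
  rw [Real.rpow_sub_natCast hx.ne']
  simp [div_eq_mul_inv]; ring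

lemma gm_pos (a r : ℝ) : ∀ᵐ x ∂(gammaMeasure a r), 0 < x := by
  rw [gammaMeasure, ae_withDensity_iff (by unfold gammaPDF; fun_prop)]
  filter_upwards [Measure.ae_ne volume (0:ℝ)] with x hx h
  by_contra hc
  exact h (gammaPDF_of_neg (lt_of_le_of_ne (not_lt.1 hc) hx))

lemma gm_aux (a r q : ℝ) (ha : 0 < a) (hr : 0 < r) :
    (fun x => (gammaPDF a r x).toReal • x ^ q) =ᵐ[volume]
    (Set.Ioi 0).indicator
      (fun x => r ^ a / Real.Gamma a * (x ^ (a + q - 1) * Real.exp (-(r * x)))) := by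
  filter_upwards [Measure.ae_ne volume (0:ℝ)] with x hx
  rcases lt_or_gt_of_ne hx with h | h
  · rw [gammaPDF_of_neg h, Set.indicator_of_notMem (by simpa using h.le)]
    simp
  · rw [Set.indicator_of_mem (by simpa using h), gammaPDF,
      ENNReal.toReal_ofReal (gammaPDFReal_nonneg ha hr x), gammaPDFReal, if_pos h.le, smul_eq_mul,
      show a + q - 1 = (a - 1) + q by ring, Real.rpow_add h]
    ring

lemma gm_int (a r q : ℝ) (ha : 0 < a) (hr : 0 < r) (haq : 0 < a + q) :
    Integrable (fun x => x ^ q) (gammaMeasure a r) := by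
  rw [gammaMeasure, integrable_withDensity_iff_integrable_smul' (by unfold gammaPDF; fun_prop)
    (ae_of_all _ fun x => by simp [gammaPDF]), integrable_congr (gm_aux a r q ha hr),
    integrable_indicator_iff measurableSet_Ioi]
  have := integrableOn_rpow_mul_exp_neg_mul_rpow (p := 1) (s := a + q - 1) (b := r)
    (by linarith) one_pos hr
  simp only [Real.rpow_one, neg_mul] at this
  exact this.const_mul _

lemma gm_val (a ζ q : ℝ) (ha : 0 < a) (hζ : 0 < ζ) (haq : 0 < a + q) :
    ∫ x, x ^ q ∂(gammaMeasure a ζ⁻¹) = ζ ^ q * Real.Gamma (a + q) / Real.Gamma a := by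
  have hr := inv_pos.2 hζ
  rw [gammaMeasure, integral_withDensity_eq_integral_toReal_smul (by unfold gammaPDF; fun_prop)
    (ae_of_all _ fun x => by simp [gammaPDF]), integral_congr_ae (gm_aux a _ q ha hr),
    integral_indicator measurableSet_Ioi, integral_const_mul,
    Real.integral_rpow_mul_exp_neg_mul_Ioi haq hr, one_div, inv_inv, Real.rpow_add hζ,
    Real.inv_rpow hζ.le]
  have := (Real.rpow_pos_of_pos hζ a).ne'
  field_simp

/-- Channel hardening: if `γ_M ~ Gamma(M, ζ)` for each `M ≥ 1`, then for fixed `ζ > 0` and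
`s > 0`, `E[(1 + γ_M)^{s-1}] / (1 + ζ M)^{s-1} → 1` as `M → ∞`. -/
theorem tendsto_mellin_div_hardening
    (ζ : ℝ) (hζ : 0 < ζ) (s : ℝ) (hs : 0 < s)
    {Ω : Type*} [MeasurableSpace Ω] (P : Measure Ω) [IsProbabilityMeasure P]
    (γ : ℕ → Ω → ℝ)
    (hγ : ∀ M : ℕ, 0 < M → Measure.map (γ M) P = gammaMeasure (M : ℝ) ζ⁻¹) :
    Tendsto (fun M : ℕ => (∫ ω, (1 + γ M ω) ^ (s - 1) ∂P) / (1 + ζ * M) ^ (s - 1))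
      atTop (nhds 1) := by
  obtain ⟨p, hp⟩ : ∃ p, p = s - 1 := ⟨_, rfl⟩
  rw [← hp]
  have hp1 : -1 ≤ p := by linarith
  obtain ⟨k, hk⟩ := exists_nat_ge p
  have hr := inv_pos.2 hζ
  have hlow := (mom_tendsto ζ hζ p 0).sub (mom_tendsto ζ hζ p 1)
  have hup := tendsto_finsetSum (Finset.range (k+1))
    fun j _ => (mom_tendsto ζ hζ p j).const_mul (k.choose j : ℝ)
  have e1 : ∑ j ∈ Finset.range (k+1), (k.choose j : ℝ) * (if j = 0 then 1 else 0) = 1 := by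
    simp
  rw [e1] at hup
  simp only [if_true, one_ne_zero, if_false, sub_zero] at hlow
  have key : ∀ᶠ n : ℕ in atTop, 0 < n ∧ (k:ℝ) + 2 < n :=
    (eventually_gt_atTop 0).and (tendsto_natCast_atTop_atTop.eventually_gt_atTop _)
  have hE : ∀ n : ℕ, 0 < n → ∫ ω, (1 + γ n ω) ^ p ∂P
      = ∫ x, (1 + x) ^ p ∂(gammaMeasure (n : ℝ) ζ⁻¹) := by
    intro n hn
    have hn' : (0:ℝ) < n := by exact_mod_cast hn
    have := isProbabilityMeasure_gammaMeasure hn' hr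
    have hm : AEMeasurable (γ n) P := by
      apply AEMeasurable.of_map_ne_zero
      rw [hγ n hn]
      exact IsProbabilityMeasure.ne_zero _
    rw [← hγ n hn, integral_map hm]
    exact Measurable.aestronglyMeasurable (by fun_prop)
  have hI : ∀ n : ℕ, 0 < n → (k:ℝ) + 2 < n → ∀ j ∈ Finset.range (k+1),
      Integrable (fun x => (k.choose j : ℝ) * x ^ (p - j)) (gammaMeasure (n : ℝ) ζ⁻¹) := by
    intro n hn hkn j hj
    have hn' : (0:ℝ) < n := by exact_mod_cast hn
    have hj' : (j:ℝ) ≤ k := by exact_mod_cast Nat.lt_succ_iff.1 (Finset.mem_range.1 hj)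
    exact (gm_int n ζ⁻¹ (p - j) hn' hr (by linarith)).const_mul _
  have hI1 : ∀ n : ℕ, 0 < n → (k:ℝ) + 2 < n →
      Integrable (fun x => (1 + x) ^ p) (gammaMeasure (n : ℝ) ζ⁻¹) := by
    intro n hn hkn
    refine (integrable_finsetSum _ (hI n hn hkn)).mono'
      (Measurable.aestronglyMeasurable (by fun_prop)) ?_
    filter_upwards [gm_pos (n:ℝ) ζ⁻¹] with x hx
    rw [Real.norm_of_nonneg (by positivity)]
    exact up_bd p x k hk hx
  refine tendsto_of_tendsto_of_tendsto_of_le_of_le' hlow hup ?_ ?_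
  · filter_upwards [key] with n ⟨hn, hkn⟩
    have hn' : (0:ℝ) < n := by exact_mod_cast hn
    have hk0 : (0:ℝ) ≤ k := by positivity
    rw [hE n hn, ← sub_div]
    refine div_le_div_of_nonneg_right ?_ (by positivity)
    rw [← gm_val n ζ _ hn' hζ (by push_cast; linarith),
      ← gm_val n ζ _ hn' hζ (by push_cast; linarith),
      ← integral_sub (gm_int n ζ⁻¹ _ hn' hr (by push_cast; linarith))
        (gm_int n ζ⁻¹ _ hn' hr (by push_cast; linarith))]
    refine integral_mono_ae ((gm_int n ζ⁻¹ _ hn' hr (by push_cast; linarith)).sub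
        (gm_int n ζ⁻¹ _ hn' hr (by push_cast; linarith))) (hI1 n hn hkn) ?_
    filter_upwards [gm_pos (n:ℝ) ζ⁻¹] with x hx
    simpa using low_bd p x hp1 hx
  · filter_upwards [key] with n ⟨hn, hkn⟩
    have hn' : (0:ℝ) < n := by exact_mod_cast hn
    rw [hE n hn]
    have e2 : ∑ j ∈ Finset.range (k+1), (k.choose j : ℝ) *
        (ζ ^ (p - j) * Real.Gamma (n + (p - j)) / Real.Gamma n / (1 + ζ * n) ^ p) =
        (∫ x, ∑ j ∈ Finset.range (k+1), (k.choose j : ℝ) * x ^ (p - j)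
          ∂(gammaMeasure (n : ℝ) ζ⁻¹)) / (1 + ζ * n) ^ p := by
      rw [integral_finsetSum _ (hI n hn hkn), Finset.sum_div]
      refine Finset.sum_congr rfl fun j hj => ?_
      have hj' : (j:ℝ) ≤ k := by exact_mod_cast Nat.lt_succ_iff.1 (Finset.mem_range.1 hj)
      rw [integral_const_mul, gm_val n ζ _ hn' hζ (by linarith)]
      ring
    rw [e2]
    refine div_le_div_of_nonneg_right ?_ (by positivity)
    refine integral_mono_ae (hI1 n hn hkn) (integrable_finsetSum _ (hI n hn hkn)) ?_
    filter_upwards [gm_pos (n:ℝ) ζ⁻¹] with x hx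
    exact up_bd p x k hk hx
end

section
/- Fix ζ > 0. For each positive integer M, let γ_M be a real random variable with the Gamma(M, ζ) distribution, i.e. with probability density f_M(x) = x^{M-1} e^{-x/ζ} / (Γ(M) ζ^M) for x ≥ 0. Then the variance of the instantaneous rate vanishes as the number of antennas grows: lim_{M → ∞} Var[log(1 + γ_M)] = 0. -/
open MeasureTheory ProbabilityTheory Filter

lemma aux_log_sq {u : ℝ} (hu : 0 < u) : (Real.log u) ^ 2 ≤ (u - 1) ^ 2 / u := by
  have hs : 0 < Real.sqrt u := Real.sqrt_pos.mpr hu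
  have h1 : |Real.log (Real.sqrt u)| ≤ |Real.sinh (Real.log (Real.sqrt u))| := by
    rw [Real.abs_sinh]
    exact Real.self_le_sinh_iff.mpr (abs_nonneg _)
  have h2 := sq_le_sq.mpr h1
  rw [Real.sinh_log hs, Real.log_sqrt hu.le] at h2
  have h3 : (Real.sqrt u) ^ 2 = u := Real.sq_sqrt hu.le
  have h4 : ((Real.sqrt u - (Real.sqrt u)⁻¹) / 2) ^ 2 = ((u - 1) ^ 2 / u) / 4 := by
    have : (Real.sqrt u - (Real.sqrt u)⁻¹) ^ 2 = (Real.sqrt u ^ 2 - 1) ^ 2 / Real.sqrt u ^ 2 := by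
      field_simp
    rw [div_pow, this, h3]; norm_num
  rw [h4] at h2
  linarith [h2, div_pow (Real.log u) 2 2]

lemma aux_integrable {a r : ℝ} (ha : 0 < a) (hr : 0 < r) : Integrable (gammaPDFReal a r) := by
  refine ⟨(measurable_gammaPDFReal a r).aestronglyMeasurable, ?_⟩
  rw [hasFiniteIntegral_iff_ofReal (ae_of_all _ (gammaPDFReal_nonneg ha hr))]
  have := lintegral_gammaPDF_eq_one ha hr
  unfold gammaPDF at this
  rw [this]; simp

lemma aux_integral {a r : ℝ} (ha : 0 < a) (hr : 0 < r) : ∫ x, gammaPDFReal a r x = 1 := by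
  rw [integral_eq_lintegral_of_nonneg_ae (ae_of_all _ (gammaPDFReal_nonneg ha hr))
    (measurable_gammaPDFReal a r).aestronglyMeasurable]
  have := lintegral_gammaPDF_eq_one ha hr
  unfold gammaPDF at this
  rw [this]; simp

lemma aux_mul {a r : ℝ} (ha : 0 < a) (hr : 0 < r) {x : ℝ} (hx : 0 < x) :
    x * gammaPDFReal a r x = a / r * gammaPDFReal (a + 1) r x := by
  have hG := (Real.Gamma_pos_of_pos ha).ne'
  simp only [gammaPDFReal, if_pos hx.le]
  rw [Real.Gamma_add_one ha.ne', Real.rpow_add_one hr.ne',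
    show a + 1 - 1 = (a - 1) + 1 by ring, Real.rpow_add_one hx.ne']
  field_simp

lemma aux_bound {a r : ℝ} (ha : 2 < a) (hr : 0 < r) (x : ℝ) :
    gammaPDFReal a r x * (Real.log (1 + x) - Real.log (1 + a / r)) ^ 2 ≤
      (1 + a / r)⁻¹ * (a / r * gammaPDFReal (a + 1) r x - 2 * (a / r) * gammaPDFReal a r x
        + (a / r) ^ 2 * (r / (a - 1)) * gammaPDFReal (a - 1) r x) := by
  rcases lt_trichotomy x 0 with hx | hx | hx
  · simp [gammaPDFReal, not_le.mpr hx]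
  · subst hx
    have h1 : a - 1 ≠ 0 := by linarith
    have h2 : a + 1 - 1 ≠ 0 := by linarith
    have h3 : a - 1 - 1 ≠ 0 := by linarith
    simp [gammaPDFReal, Real.zero_rpow h1, Real.zero_rpow h3, show a ≠ 0 by linarith]
  · have e1 := aux_mul (by linarith : 0 < a) hr hx
    have e2 := aux_mul (by linarith : 0 < a - 1) hr hx
    rw [sub_add_cancel] at e2
    have hp := gammaPDFReal_nonneg (by linarith : 0 < a) hr x
    have ha1 : 0 < a - 1 := by linarith
    have e3 : r / (a - 1) * gammaPDFReal (a - 1) r x = gammaPDFReal a r x / x := by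
      have : gammaPDFReal a r x = r / (a - 1) * (x * gammaPDFReal (a - 1) r x) := by
        rw [e2]; field_simp
      rw [this]; field_simp
    rw [mul_assoc ((a / r) ^ 2), e3, ← e1]
    have hm : 0 < a / r := by positivity
    generalize a / r = m at *
    generalize gammaPDFReal a r x = p at *
    rw [← Real.log_div (by positivity) (by positivity)]
    have hl := aux_log_sq (u := (1 + x) / (1 + m)) (by positivity)
    have hb : ((1 + x) / (1 + m) - 1) ^ 2 / ((1 + x) / (1 + m)) ≤ (x - m) ^ 2 / (x * (1 + m)) := by
      have : ((1 + x) / (1 + m) - 1) ^ 2 / ((1 + x) / (1 + m))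
          = (x - m) ^ 2 / ((1 + x) * (1 + m)) := by
        field_simp; ring
      rw [this]
      gcongr
      linarith
    calc _ ≤ p * ((x - m) ^ 2 / (x * (1 + m))) := by gcongr; exact hl.trans hb
      _ = _ := by field_simp; ring

lemma aux_var {a r : ℝ} (ha : 2 < a) (hr : 0 < r) :
    variance (fun x => Real.log (1 + x)) (gammaMeasure a r) ≤ 1 / (a - 1) := by
  have ha0 : 0 < a := by linarith
  have ha1 : 0 < a - 1 := by linarith
  have ha2 : 0 < a + 1 := by linarith
  have := isProbabilityMeasure_gammaMeasure ha0 hr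
  have hmeas : Measurable (fun x : ℝ => Real.log (1 + x)) := by fun_prop
  rw [← variance_sub_const hmeas.aestronglyMeasurable (Real.log (1 + a / r))]
  refine (variance_le_expectation_sq (hmeas.sub_const _).aestronglyMeasurable).trans ?_
  have hI : ∀ g : ℝ → ℝ, ∫ x, g x ∂(gammaMeasure a r) = ∫ x, gammaPDFReal a r x * g x := by
    intro g
    unfold gammaMeasure
    rw [integral_withDensity_eq_integral_toReal_smul
      (by unfold gammaPDF; fun_prop) (ae_of_all _ fun x => by simp [gammaPDF])]
    congr 1; ext x
    simp [gammaPDF, ENNReal.toReal_ofReal (gammaPDFReal_nonneg ha0 hr x)]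
  rw [hI]
  have i1 := (aux_integrable ha2 hr).const_mul (a / r)
  have i2 := (aux_integrable ha0 hr).const_mul (2 * (a / r))
  have i3 := (aux_integrable ha1 hr).const_mul ((a / r) ^ 2 * (r / (a - 1)))
  refine (integral_mono_of_nonneg (ae_of_all _ fun x => ?_) (((i1.sub i2).add i3).const_mul
    (1 + a / r)⁻¹) (ae_of_all _ fun x => aux_bound ha hr x)).trans ?_
  · exact mul_nonneg (gammaPDFReal_nonneg ha0 hr x) (sq_nonneg _)
  · rw [integral_const_mul, integral_add' (i1.sub i2) i3, integral_sub' i1 i2, integral_const_mul,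
      integral_const_mul, integral_const_mul, aux_integral ha0 hr, aux_integral ha1 hr,
      aux_integral ha2 hr]
    have : a / r * 1 - 2 * (a / r) * 1 + (a / r) ^ 2 * (r / (a - 1)) * 1 = (a / r) / (a - 1) := by
      field_simp; ring
    rw [this, ← mul_div_assoc]
    gcongr
    rw [inv_mul_le_iff₀ (by positivity)]
    linarith

/-- Vanishing rate variance: if `γ_M ~ Gamma(M, ζ)` for each `M ≥ 1` with `ζ > 0` fixed, then
`Var[log(1 + γ_M)] → 0` as `M → ∞`. -/
theorem variance_log_one_add_gamma_tendsto_zero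
    (ζ : ℝ) (hζ : 0 < ζ)
    {Ω : Type*} [MeasurableSpace Ω] (P : Measure Ω) [IsProbabilityMeasure P]
    (γ : ℕ → Ω → ℝ)
    (hγ : ∀ M : ℕ, 0 < M → Measure.map (γ M) P = gammaMeasure (M : ℝ) ζ⁻¹) :
    Tendsto (fun M : ℕ => variance (fun ω => Real.log (1 + γ M ω)) P) atTop (nhds 0) := by
  have hlim : Tendsto (fun M : ℕ => 1 / ((M : ℝ) - 1)) atTop (nhds 0) := by
    have : Tendsto (fun M : ℕ => (M : ℝ) - 1) atTop atTop :=
      tendsto_atTop_add_const_right _ (-1) tendsto_natCast_atTop_atTop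
    simp only [one_div]
    exact this.inv_tendsto_atTop
  refine tendsto_of_tendsto_of_tendsto_of_le_of_le' tendsto_const_nhds hlim
    (Eventually.of_forall fun M => variance_nonneg _ _) ?_
  filter_upwards [eventually_gt_atTop 2] with M hM
  have hM' : (2 : ℝ) < M := by exact_mod_cast hM
  have hr : 0 < ζ⁻¹ := inv_pos.mpr hζ
  have := isProbabilityMeasure_gammaMeasure (by linarith : (0 : ℝ) < M) hr
  have hmap := hγ M (by omega)
  have hae : AEMeasurable (γ M) P := by
    by_contra h
    rw [Measure.map_of_not_aemeasurable h] at hmap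
    exact IsProbabilityMeasure.ne_zero (gammaMeasure (M : ℝ) ζ⁻¹) hmap.symm
  have hmeas : Measurable (fun x : ℝ => Real.log (1 + x)) := by fun_prop
  have := variance_map (μ := P) (Y := γ M) (X := fun x : ℝ => Real.log (1 + x))
    hmeas.aemeasurable hae
  rw [hmap] at this
  have h2 := aux_var hM' hr
  rw [this] at h2
  exact h2
end
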